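/- Let τ be an inverse semigroup T₁ topology on the bicyclic monoid C(p,q), i.e., a T₁ topology for which multiplication is jointly continuous and inversion is continuous. If there exists a point q^i p^j ∈ C(p,q) such that the subspace ↓≼ q^i p^j is quasi-regular at q^i p^j, then τ is the discrete topology. -/

import Mathlib

/-- The bicyclic monoid `C(p,q)` modeled on `ℕ × ℕ`, where `(k, l)` represents `q^k p^l`:
`(k,l)·(m,n) = (k + (m ∸ l), n + (l ∸ m))`. -/
def bmul (a b : ℕ × ℕ) : ℕ × ℕ := (a.1 + (b.1 - a.2), b.2 + (a.2 - b.1))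

/-- Inversion on the bicyclic monoid: `(q^k p^l)⁻¹ = q^l p^k`. -/
def binv (a : ℕ × ℕ) : ℕ × ℕ := (a.2, a.1)

/-- The natural partial order on the bicyclic monoid: `x ≼ y` iff `x = y·e`
for some idempotent `e`. -/
def bLe (x y : ℕ × ℕ) : Prop := ∃ e : ℕ × ℕ, bmul e e = e ∧ x = bmul y e

/-- `↓≼ x`, the down-set of `x` with respect to the natural partial order. -/
def bDown (x : ℕ × ℕ) : Set (ℕ × ℕ) := {y | bLe y x}

lemma self_mem_bDown (i j : ℕ) : ((i, j) : ℕ × ℕ) ∈ bDown (i, j) :=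
  ⟨(j, j), by simp [bmul], by simp [bmul]⟩

/-- The subspace topology on a subset `Y` of the bicyclic monoid. -/
def subT (τ : TopologicalSpace (ℕ × ℕ)) (Y : Set (ℕ × ℕ)) : TopologicalSpace Y :=
  TopologicalSpace.induced Subtype.val τ

/-- A space is quasi-regular at a point `x` if every open neighbourhood `U` of `x`
contains the closure of some nonempty open set. -/
def QuasiRegularAt {X : Type*} (t : TopologicalSpace X) (x : X) : Prop :=
  ∀ U : Set X, @IsOpen X t U → x ∈ U →
    ∃ V : Set X, V.Nonempty ∧ @IsOpen X t V ∧ @closure X t V ⊆ U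

/-!
Right multiplication by the idempotent `q^m p^m` fixes all but finitely many points of the down-set
`↓≼ q^i p^j`, and for a suitable `m` it carries a given point `a` to a given smaller one. For
`a ≠ q^i p^j`, quasi-regularity provides a nonempty open subset `V` of `↓≼ q^i p^j` with
`a ∉ cl V`. Either `V` is finite, or some such multiplication `g` satisfies `g a ∈ V`, and then
`g⁻¹(V) ∖ cl V` is a finite open neighbourhood of `a`. Both ways `↓≼ q^i p^j` has an isolated point
`q^(i+n) p^(j+n)`. Its preimage under the continuous map
`x ↦ q^(i+n) p^k (x x⁻¹) q^k p^(j+n)` is `{x | x.1 ≤ k}`, which is therefore open, and so is its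
image `{x | x.2 ≤ k}` under inversion. Hence every point has a finite neighbourhood.
-/

open Filter Set

theorem exists_isOpen_singleton_of_quasiRegularAt {X : Type*} [t : TopologicalSpace X] [T1Space X]
    {o a : X} (hqr : QuasiRegularAt t o) (hoa : o ≠ a)
    (hmove : ∀ᶠ v in cofinite, ∃ g : X → X,
      Continuous g ∧ g a = v ∧ ∀ᶠ w in cofinite, g w = w) :
    ∃ x : X, IsOpen {x} := by
  obtain ⟨V, ⟨x, hxV⟩, hV, hVa⟩ := hqr {a}ᶜ isOpen_compl_singleton hoa
  rcases V.finite_or_infinite with hfin | hinf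
  · exact ⟨x, isOpen_singleton_of_finite_mem_nhds x (hV.mem_nhds hxV) hfin⟩
  obtain ⟨v, hvV, g, hg, rfl, hfix⟩ := (hinf.frequently_cofinite.and_eventually hmove).exists
  have hopen : IsOpen (g ⁻¹' V ∩ (closure V)ᶜ) :=
    (hV.preimage hg).inter isClosed_closure.isOpen_compl
  have ha : a ∈ g ⁻¹' V ∩ (closure V)ᶜ := ⟨hvV, fun h => hVa h rfl⟩
  have hmoved : g ⁻¹' V ∩ (closure V)ᶜ ⊆ {w | ¬g w = w} := fun w ⟨hgw, hw⟩ hfixed =>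
    hw (subset_closure (hfixed ▸ hgw))
  exact ⟨a, isOpen_singleton_of_finite_mem_nhds a (hopen.mem_nhds ha) (hfix.subset hmoved)⟩

theorem bmul_binv_self (x : ℕ × ℕ) : bmul x (binv x) = (x.1, x.1) := by
  simp [bmul, binv]

theorem bmul_diag_of_le {x : ℕ × ℕ} {m : ℕ} (hm : m ≤ x.2) : bmul x (m, m) = x := by
  ext <;> simp only [bmul] <;> omega

theorem bmul_add_diag (i j n m : ℕ) :
    bmul (i + n, j + n) (j + m, j + m) = (i + max n m, j + max n m) := by
  ext <;> simp only [bmul] <;> omega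

theorem bmul_diag_bmul (a b k m : ℕ) :
    bmul (bmul (a, k) (m, m)) (k, b) = (a + (m - k), b + (m - k)) := by
  ext <;> simp only [bmul] <;> omega

theorem bmul_self_eq_self_iff (e : ℕ × ℕ) : bmul e e = e ↔ e.1 = e.2 := by
  simp only [bmul, Prod.ext_iff]
  omega

theorem mem_bDown_iff {i j : ℕ} {x : ℕ × ℕ} :
    x ∈ bDown (i, j) ↔ ∃ n, x = (i + n, j + n) := by
  constructor
  · rintro ⟨⟨m, m'⟩, he, rfl⟩
    obtain rfl : m = m' := (bmul_self_eq_self_iff _).1 he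
    refine ⟨m - j, ?_⟩
    simp only [bmul, Prod.mk.injEq, true_and]
    omega
  · rintro ⟨n, rfl⟩
    exact ⟨(j + n, j + n), (bmul_self_eq_self_iff _).2 rfl,
      by simpa using (bmul_add_diag i j 0 n).symm⟩

theorem mapsTo_bmul_diag_bDown (i j m : ℕ) :
    MapsTo (bmul · (j + m, j + m)) (bDown (i, j)) (bDown (i, j)) := by
  intro x hx
  obtain ⟨n, rfl⟩ := mem_bDown_iff.1 hx
  exact mem_bDown_iff.2 ⟨max n m, bmul_add_diag i j n m⟩

theorem eventually_cofinite_bmul_diag_eq_self (i j m : ℕ) :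
    ∀ᶠ w : bDown (i, j) in cofinite, bmul w (m, m) = w := by
  refine ((finite_Iic (i + m, m)).preimage Subtype.val_injective.injOn).subset ?_
  rintro ⟨w, hw⟩ hmoved
  obtain ⟨n, rfl⟩ := mem_bDown_iff.1 hw
  have hlt : j + n < m := not_le.1 fun hle => hmoved (bmul_diag_of_le hle)
  exact ⟨by simp only; omega, hlt.le⟩

section Topology

-- This instance takes precedence over the product topology on `ℕ × ℕ`.
variable [τ : TopologicalSpace (ℕ × ℕ)]

theorem exists_isOpen_add_mem_iff_of_quasiRegularAt [T1Space (ℕ × ℕ)]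
    (hmul : ∀ c, Continuous (bmul · c)) {i j : ℕ}
    (hqr : QuasiRegularAt (subT τ (bDown (i, j))) ⟨(i, j), self_mem_bDown i j⟩) :
    ∃ (n : ℕ) (O : Set (ℕ × ℕ)), IsOpen O ∧ ∀ m, (i + m, j + m) ∈ O ↔ m = n := by
  let top : bDown (i, j) := ⟨(i, j), self_mem_bDown i j⟩
  let next : bDown (i, j) := ⟨(i + 1, j + 1), mem_bDown_iff.2 ⟨1, rfl⟩⟩
  have hne : top ≠ next := by simp [top, next]
  have hmove : ∀ᶠ v in cofinite, ∃ g : bDown (i, j) → bDown (i, j),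
      Continuous g ∧ g next = v ∧ ∀ᶠ w in cofinite, g w = w := by
    filter_upwards [eventually_cofinite_ne top]
    rintro ⟨v, hv⟩ hv_ne
    obtain ⟨n, rfl⟩ := mem_bDown_iff.1 hv
    have hn : 1 ≤ n := Nat.one_le_iff_ne_zero.2 fun h => hv_ne (by simp [top, h])
    refine ⟨_, (hmul _).restrict (mapsTo_bmul_diag_bDown i j n), Subtype.ext ?_, ?_⟩
    · exact (bmul_add_diag i j 1 n).trans (by rw [max_eq_right hn])
    · exact (eventually_cofinite_bmul_diag_eq_self i j (j + n)).mono fun _ h => Subtype.ext h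
  obtain ⟨⟨x, hx⟩, hopen⟩ := exists_isOpen_singleton_of_quasiRegularAt
    (t := instTopologicalSpaceSubtype) hqr hne hmove
  obtain ⟨n, rfl⟩ := mem_bDown_iff.1 hx
  obtain ⟨O, hO, hOn⟩ := isOpen_induced_iff.1 hopen
  refine ⟨n, O, hO, fun m => ?_⟩
  simpa using Set.ext_iff.1 hOn ⟨(i + m, j + m), mem_bDown_iff.2 ⟨m, rfl⟩⟩

variable {i j n : ℕ} {O : Set (ℕ × ℕ)}

theorem isOpen_setOf_fst_le
    (hmul : Continuous fun x : (ℕ × ℕ) × (ℕ × ℕ) => bmul x.1 x.2) (hinv : Continuous binv)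
    (hO : IsOpen O) (hOn : ∀ m, (i + m, j + m) ∈ O ↔ m = n) (k : ℕ) :
    IsOpen {x : ℕ × ℕ | x.1 ≤ k} := by
  have hcont : Continuous fun x => bmul (bmul (i + n, k) (bmul x (binv x))) (k, j + n) :=
    hmul.comp₂ (hmul.comp₂ continuous_const (hmul.comp₂ continuous_id hinv)) continuous_const
  convert hO.preimage hcont using 1
  ext x
  rw [mem_ofPred_eq, mem_preimage, bmul_binv_self, bmul_diag_bmul, add_assoc, add_assoc, hOn]
  omega

theorem isOpen_Iic_of_isOpen_add_mem_iff
    (hmul : Continuous fun x : (ℕ × ℕ) × (ℕ × ℕ) => bmul x.1 x.2) (hinv : Continuous binv)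
    (hO : IsOpen O) (hOn : ∀ m, (i + m, j + m) ∈ O ↔ m = n) (x : ℕ × ℕ) :
    IsOpen (Iic x) :=
  (isOpen_setOf_fst_le hmul hinv hO hOn x.1).inter
    ((isOpen_setOf_fst_le hmul hinv hO hOn x.2).preimage hinv)

end Topology

/-- Theorem 2: let `τ` be an inverse semigroup `T₁` topology on `C(p,q)` (i.e. the
multiplication is jointly continuous and the inversion is continuous). If the subspace
`↓≼ q^i p^j` is quasi-regular at `q^i p^j` for some point `q^i p^j`, then `τ` is
discrete. -/
theorem stmt14 (τ : TopologicalSpace (ℕ × ℕ))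
    (hT1 : @T1Space (ℕ × ℕ) τ)
    (hmul : @Continuous ((ℕ × ℕ) × (ℕ × ℕ)) (ℕ × ℕ)
      (@instTopologicalSpaceProd (ℕ × ℕ) (ℕ × ℕ) τ τ) τ (fun p => bmul p.1 p.2))
    (hinv : @Continuous (ℕ × ℕ) (ℕ × ℕ) τ τ binv)
    (i j : ℕ)
    (hqr : QuasiRegularAt (subT τ (bDown (i, j))) ⟨(i, j), self_mem_bDown i j⟩) :
    τ = ⊥ := by
  obtain ⟨n, O, hO, hOn⟩ := exists_isOpen_add_mem_iff_of_quasiRegularAt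
    (fun c => hmul.comp₂ continuous_id continuous_const) hqr
  exact eq_bot_of_singletons_open fun x => isOpen_singleton_of_finite_mem_nhds x
    ((isOpen_Iic_of_isOpen_add_mem_iff hmul hinv hO hOn x).mem_nhds self_mem_Iic) (finite_Iic x)
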